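/- Let f : V × V → W be a decomposable nondegenerate object of SSKE with V = V̄₁ ⊕ V̄₂, f(V̄₁, V̄₂) = 0, W̄ᵢ the span of f(V̄ᵢ, V̄ᵢ), and identify L_{f̄ᵢ} with the graded subspace V̄ᵢ ⊕ W̄ᵢ of L_f = V ⊕ W. Then L_{f̄₁} and L_{f̄₂} are Lie subsuperalgebras of L_f, L_f = L_{f̄₁} + L_{f̄₂}, [L_{f̄₁}, L_{f̄₂}] = 0, and L_{f̄₁} ∩ L_{f̄₂} = (L_{f̄₁})² ∩ (L_{f̄₂})² = W̄₁ ∩ W̄₂ ⊆ Z(L_f); that is, L_f is the central sum of L_{f̄₁} and L_{f̄₂}. -/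

import Mathlib

/-!
Complementary subspaces `V₁`, `V₂` that annihilate each other from both sides give
`f(V, V) = f(V₁, V₁) + f(V₂, V₂)`, whence `L_f = L_{f̄₁} + L_{f̄₂}`. The bracket of `L_f` only sees
the `V`-components, and those vanish on `L_{f̄₁} ∩ L_{f̄₂}` because `V₁ ∩ V₂ = 0`, so this
intersection is central. Supersymmetry on homogeneous elements turns `f(V₁, V₂) = 0` into
`f(V₂, V₁) = 0`, because `V₁` and `V₂` are graded.
-/

open TensorProduct

noncomputable section

/-- The sign `(−1)^{σ·τ}` (for degrees `σ τ : ℤ/2`) as an element of the field `F`. -/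
def ssign (F : Type*) [Field F] (σ τ : ZMod 2) : F := (-1 : F) ^ (σ * τ).val

variable {F V W L : Type*}

section Defs

variable [Field F] [AddCommGroup V] [Module F V] [AddCommGroup W] [Module F W]
  [AddCommGroup L] [Module F L]

/-- `f : V × V → W` is an object of the category `SSKE`: a grading-preserving
skew-supersymmetric bilinear map between superspaces whose image spans `W`. -/
structure IsSSKE (gV : ZMod 2 → Submodule F V) (gW : ZMod 2 → Submodule F W)
    (f : V →ₗ[F] V →ₗ[F] W) : Prop where
  internalV : DirectSum.IsInternal gV
  internalW : DirectSum.IsInternal gW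
  grading : ∀ σ τ : ZMod 2, ∀ u ∈ gV σ, ∀ v ∈ gV τ, f u v ∈ gW (σ + τ)
  skew : ∀ σ τ : ZMod 2, ∀ u ∈ gV σ, ∀ v ∈ gV τ, f u v = -(ssign F σ τ) • f v u
  span_eq_top : Submodule.span F {w : W | ∃ u v : V, f u v = w} = ⊤

/-- A subspace `U` of a superspace is graded: `U = (U ∩ V₀) ⊕ (U ∩ V₁)`. -/
def IsGradedSub (gV : ZMod 2 → Submodule F V) (U : Submodule F V) : Prop :=
  U = U ⊓ gV 0 ⊔ U ⊓ gV 1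

/-- The subspace `X_g` of `V ⊗ W` (for the restriction of `g` to a subspace `U` of `V`),
spanned by all `(−1)^{|a||c|} a ⊗ g(b,c) + (−1)^{|b||a|} b ⊗ g(c,a) + (−1)^{|c||b|} c ⊗ g(a,b)`
with `a, b, c` homogeneous elements of `U`. For `U = ⊤` this is `X_g` itself. -/
def XFr (gV : ZMod 2 → Submodule F V) (U : Submodule F V)
    (g : V →ₗ[F] V →ₗ[F] W) : Submodule F (V ⊗[F] W) :=
  Submodule.span F {z : V ⊗[F] W | ∃ σ τ ρ : ZMod 2, ∃ a ∈ U ⊓ gV σ, ∃ b ∈ U ⊓ gV τ,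
    ∃ c ∈ U ⊓ gV ρ,
    z = ssign F σ ρ • (a ⊗ₜ[F] g b c) + ssign F τ σ • (b ⊗ₜ[F] g c a)
      + ssign F ρ τ • (c ⊗ₜ[F] g a b)}

/-- The epicenter `Z*(g)` of (the restriction to a subspace `U` of) a
skew-supersymmetric bilinear map `g`: all `w = g(u,v)` with `u, v` homogeneous in `U`
such that `(−1)^{|x||v|} x ⊗ w ∈ X_g` for every homogeneous `x ∈ U`. -/
def Zstar (gV : ZMod 2 → Submodule F V) (U : Submodule F V)
    (g : V →ₗ[F] V →ₗ[F] W) : Set W :=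
  {w : W | ∃ σ τ : ZMod 2, ∃ u ∈ U ⊓ gV σ, ∃ v ∈ U ⊓ gV τ, w = g u v ∧
    ∀ ρ : ZMod 2, ∀ x ∈ U ⊓ gV ρ, ssign F ρ τ • (x ⊗ₜ[F] w) ∈ XFr gV U g}

/-- The subspace `U ⊗ T` of `V ⊗ W`. -/
def tensSpan (U : Submodule F V) (T : Submodule F W) : Submodule F (V ⊗[F] W) :=
  Submodule.span F {z : V ⊗[F] W | ∃ u ∈ U, ∃ t ∈ T, z = u ⊗ₜ[F] t}

/-- The bracket of the Lie superalgebra `L_f = V ⊕ W`: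
`[(v,w),(v′,w′)] = (0, f(v,v′))`. -/
def superBracket (f : V →ₗ[F] V →ₗ[F] W) :
    (V × W) →ₗ[F] (V × W) →ₗ[F] (V × W) :=
  ((f.compl₂ (LinearMap.fst F V W)).compr₂ (LinearMap.inr F V W)).comp
    (LinearMap.fst F V W)

/-- The derived subalgebra `L² `: the span of all brackets. -/
def derivedSub (B : L →ₗ[F] L →ₗ[F] L) : Submodule F L :=
  Submodule.span F {z : L | ∃ x y : L, z = B x y}

/-- The span of all brackets of elements of a subspace `P`. -/
def derivedOn (B : L →ₗ[F] L →ₗ[F] L) (P : Submodule F L) : Submodule F L :=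
  Submodule.span F {z : L | ∃ x ∈ P, ∃ y ∈ P, z = B x y}

/-- The axioms of a Lie superalgebra: `L` with grading `gL`, an internal direct sum,
and a bilinear bracket `B` which preserves the grading and satisfies graded
skew-symmetry and the graded Jacobi identity. -/
structure IsLieSuper (gL : ZMod 2 → Submodule F L) (B : L →ₗ[F] L →ₗ[F] L) : Prop where
  internal : DirectSum.IsInternal gL
  grading : ∀ σ τ : ZMod 2, ∀ x ∈ gL σ, ∀ y ∈ gL τ, B x y ∈ gL (σ + τ)
  skew : ∀ σ τ : ZMod 2, ∀ x ∈ gL σ, ∀ y ∈ gL τ, B x y = -(ssign F σ τ) • B y x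
  jacobi : ∀ σ τ ρ : ZMod 2, ∀ x ∈ gL σ, ∀ y ∈ gL τ, ∀ z ∈ gL ρ,
    ssign F σ ρ • B x (B y z) + ssign F τ σ • B y (B z x)
      + ssign F ρ τ • B z (B x y) = 0

end Defs

section Map₂

variable {R M N P : Type*} [CommSemiring R] [AddCommMonoid M] [Module R M]
  [AddCommMonoid N] [Module R N] [AddCommMonoid P] [Module R P]

theorem span_setOf_eq_map₂ (f : M →ₗ[R] N →ₗ[R] P) (p : Submodule R M) (q : Submodule R N) :
    Submodule.span R {z | ∃ x ∈ p, ∃ y ∈ q, z = f x y} = Submodule.map₂ f p q := by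
  rw [Submodule.map₂_eq_span_image2]
  congr 1
  simp only [Set.image2, SetLike.mem_coe, eq_comm]

theorem map₂_sup_self_of_apply_eq_zero {f : M →ₗ[R] M →ₗ[R] P} {p q : Submodule R M}
    (hpq : ∀ x ∈ p, ∀ y ∈ q, f x y = 0) (hqp : ∀ x ∈ q, ∀ y ∈ p, f x y = 0) :
    Submodule.map₂ f (p ⊔ q) (p ⊔ q) = Submodule.map₂ f p p ⊔ Submodule.map₂ f q q := by
  have hpq' : Submodule.map₂ f p q = ⊥ := le_bot_iff.1 (Submodule.map₂_le.2 hpq)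
  have hqp' : Submodule.map₂ f q p = ⊥ := le_bot_iff.1 (Submodule.map₂_le.2 hqp)
  rw [Submodule.map₂_sup_left, Submodule.map₂_sup_right, Submodule.map₂_sup_right, hpq', hqp',
    sup_bot_eq, bot_sup_eq]

end Map₂

section Superspace

variable [Field F] [AddCommGroup V] [Module F V] [AddCommGroup W] [Module F W]
  {gV : ZMod 2 → Submodule F V} {gW : ZMod 2 → Submodule F W}
  {f : V →ₗ[F] V →ₗ[F] W} {U U₁ U₂ : Submodule F V}

theorem IsGradedSub.le_of_inf_le (hU : IsGradedSub gV U) {S : Submodule F V}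
    (h : ∀ σ, U ⊓ gV σ ≤ S) : U ≤ S :=
  hU.le.trans (sup_le (h 0) (h 1))

theorem IsSSKE.apply_eq_zero_symm (hf : IsSSKE gV gW f) (hU₁ : IsGradedSub gV U₁)
    (hU₂ : IsGradedSub gV U₂) (h : ∀ u ∈ U₁, ∀ v ∈ U₂, f u v = 0) :
    ∀ v ∈ U₂, ∀ u ∈ U₁, f v u = 0 := by
  have homogeneous (τ : ZMod 2) : ∀ v ∈ U₂ ⊓ gV τ, U₁ ≤ LinearMap.ker (f v) := fun v hv =>
    hU₁.le_of_inf_le fun σ u hu => by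
      rw [LinearMap.mem_ker, hf.skew τ σ v hv.2 u hu.2, h u hu.1 v hv.1, smul_zero]
  intro v hv u hu
  exact hU₂.le_of_inf_le (S := LinearMap.ker (f.flip u)) (fun τ v hv => homogeneous τ v hv hu) hv

theorem IsSSKE.map₂_top_top (hf : IsSSKE gV gW f) : Submodule.map₂ f ⊤ ⊤ = ⊤ := by
  simpa only [Submodule.map₂_eq_span_image2, Submodule.top_coe, Set.image2, Set.mem_univ,
    true_and] using hf.span_eq_top

end Superspace

section Bracket

variable [Field F] [AddCommGroup V] [Module F V] [AddCommGroup W] [Module F W]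
  {f : V →ₗ[F] V →ₗ[F] W} {U U₁ U₂ : Submodule F V}

theorem superBracket_apply (f : V →ₗ[F] V →ₗ[F] W) (x y : V × W) :
    superBracket f x y = (0, f x.1 y.1) := rfl

theorem derivedOn_superBracket (f : V →ₗ[F] V →ₗ[F] W) (P : Submodule F (V × W)) :
    derivedOn (superBracket f) P =
      (⊥ : Submodule F V).prod
        (Submodule.map₂ f (P.map (LinearMap.fst F V W)) (P.map (LinearMap.fst F V W))) := by
  rw [derivedOn, span_setOf_eq_map₂, ← Submodule.map_inr, Submodule.map_map₂,
    Submodule.map₂_map_map]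
  rfl

/-- The subspace `L_{f̄} = U ⊕ f(U, U)` of `L_f = V ⊕ W` attached to the restriction `f̄` of `f`
to `U × U`, where `f(U, U)` denotes the span of the values. -/
def restrictedAlgebra (f : V →ₗ[F] V →ₗ[F] W) (U : Submodule F V) : Submodule F (V × W) :=
  U.prod (Submodule.map₂ f U U)

theorem superBracket_mem_restrictedAlgebra {x y : V × W} (hx : x ∈ restrictedAlgebra f U)
    (hy : y ∈ restrictedAlgebra f U) : superBracket f x y ∈ restrictedAlgebra f U :=
  ⟨U.zero_mem, Submodule.apply_mem_map₂ f hx.1 hy.1⟩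

theorem superBracket_eq_zero_of_mem_restrictedAlgebra (h : ∀ u ∈ U₁, ∀ v ∈ U₂, f u v = 0)
    {x y : V × W} (hx : x ∈ restrictedAlgebra f U₁) (hy : y ∈ restrictedAlgebra f U₂) :
    superBracket f x y = 0 := by
  rw [superBracket_apply, h x.1 hx.1 y.1 hy.1, Prod.mk_zero_zero]

theorem derivedOn_restrictedAlgebra (f : V →ₗ[F] V →ₗ[F] W) (U : Submodule F V) :
    derivedOn (superBracket f) (restrictedAlgebra f U) =
      (⊥ : Submodule F V).prod (Submodule.map₂ f U U) := by
  rw [derivedOn_superBracket, restrictedAlgebra, Submodule.prod_map_fst]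

theorem restrictedAlgebra_sup_eq_top (hU : Codisjoint U₁ U₂) (hf : Submodule.map₂ f ⊤ ⊤ = ⊤)
    (h₁₂ : ∀ u ∈ U₁, ∀ v ∈ U₂, f u v = 0) (h₂₁ : ∀ u ∈ U₂, ∀ v ∈ U₁, f u v = 0) :
    restrictedAlgebra f U₁ ⊔ restrictedAlgebra f U₂ = ⊤ := by
  rw [restrictedAlgebra, restrictedAlgebra, Submodule.prod_sup_prod,
    ← map₂_sup_self_of_apply_eq_zero h₁₂ h₂₁, hU.eq_top, hf, Submodule.prod_top]

theorem restrictedAlgebra_inf (hU : Disjoint U₁ U₂) :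
    restrictedAlgebra f U₁ ⊓ restrictedAlgebra f U₂ =
      (⊥ : Submodule F V).prod (Submodule.map₂ f U₁ U₁ ⊓ Submodule.map₂ f U₂ U₂) := by
  rw [restrictedAlgebra, restrictedAlgebra, Submodule.prod_inf_prod, hU.eq_bot]

theorem restrictedAlgebra_inf_eq_derivedOn_inf (hU : Disjoint U₁ U₂) :
    restrictedAlgebra f U₁ ⊓ restrictedAlgebra f U₂ =
      derivedOn (superBracket f) (restrictedAlgebra f U₁) ⊓
        derivedOn (superBracket f) (restrictedAlgebra f U₂) := by
  rw [restrictedAlgebra_inf hU, derivedOn_restrictedAlgebra, derivedOn_restrictedAlgebra,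
    Submodule.prod_inf_prod, inf_idem]

theorem superBracket_eq_zero_of_mem_restrictedAlgebra_inf (hU : Disjoint U₁ U₂) {z : V × W}
    (hz : z ∈ restrictedAlgebra f U₁ ⊓ restrictedAlgebra f U₂) (x : V × W) :
    superBracket f z x = 0 := by
  have hz₁ : z.1 = 0 := Submodule.disjoint_def.1 hU z.1 hz.1.1 hz.2.1
  rw [superBracket_apply, hz₁, map_zero, LinearMap.zero_apply, Prod.mk_zero_zero]

end Bracket

theorem stmt11_general [Field F] [AddCommGroup V] [Module F V] [AddCommGroup W] [Module F W]
    {f : V →ₗ[F] V →ₗ[F] W} (hf : Submodule.map₂ f ⊤ ⊤ = ⊤)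
    {V1 V2 : Submodule F V} (hcompl : IsCompl V1 V2)
    (h₁₂ : ∀ u ∈ V1, ∀ v ∈ V2, f u v = 0) (h₂₁ : ∀ u ∈ V2, ∀ v ∈ V1, f u v = 0) :
    ∀ W1 W2 : Submodule F W,
      W1 = Submodule.span F {w : W | ∃ u ∈ V1, ∃ v ∈ V1, w = f u v} →
      W2 = Submodule.span F {w : W | ∃ u ∈ V2, ∃ v ∈ V2, w = f u v} →
      ∀ L1 L2 : Submodule F (V × W),
        L1 = V1.prod W1 → L2 = V2.prod W2 →
        (∀ x ∈ L1, ∀ y ∈ L1, superBracket f x y ∈ L1) ∧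
        (∀ x ∈ L2, ∀ y ∈ L2, superBracket f x y ∈ L2) ∧
        L1 ⊔ L2 = ⊤ ∧
        (∀ x ∈ L1, ∀ y ∈ L2, superBracket f x y = 0) ∧
        L1 ⊓ L2 = derivedOn (superBracket f) L1 ⊓ derivedOn (superBracket f) L2 ∧
        L1 ⊓ L2 = (⊥ : Submodule F V).prod (W1 ⊓ W2) ∧
        (∀ z ∈ L1 ⊓ L2, ∀ x : V × W, superBracket f z x = 0) := by
  rintro W1 W2 hW1 hW2 L1 L2 rfl rfl
  rw [span_setOf_eq_map₂] at hW1 hW2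
  subst hW1 hW2
  exact ⟨fun _ hx _ hy => superBracket_mem_restrictedAlgebra hx hy,
    fun _ hx _ hy => superBracket_mem_restrictedAlgebra hx hy,
    restrictedAlgebra_sup_eq_top hcompl.codisjoint hf h₁₂ h₂₁,
    fun _ hx _ hy => superBracket_eq_zero_of_mem_restrictedAlgebra h₁₂ hx hy,
    restrictedAlgebra_inf_eq_derivedOn_inf hcompl.disjoint,
    restrictedAlgebra_inf hcompl.disjoint,
    fun _ hz => superBracket_eq_zero_of_mem_restrictedAlgebra_inf hcompl.disjoint hz⟩

/-- For a decomposable nondegenerate object `f` of SSKE, the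
subspaces `L_{f̄ᵢ} = V̄ᵢ ⊕ W̄ᵢ` of `L_f = V ⊕ W` are Lie subsuperalgebras,
`L_f = L_{f̄₁} + L_{f̄₂}`, `[L_{f̄₁}, L_{f̄₂}] = 0`, and
`L_{f̄₁} ∩ L_{f̄₂} = (L_{f̄₁})² ∩ (L_{f̄₂})² = W̄₁ ∩ W̄₂ ⊆ Z(L_f)`; that is,
`L_f` is the central sum of `L_{f̄₁}` and `L_{f̄₂}`. -/
theorem stmt11 [Field F] [AddCommGroup V] [Module F V] [AddCommGroup W] [Module F W]
    [FiniteDimensional F V] [FiniteDimensional F W] [Nontrivial V] [Nontrivial W]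
    (hchar2 : (2 : F) ≠ 0) (hchar3 : (3 : F) ≠ 0)
    (gV : ZMod 2 → Submodule F V) (gW : ZMod 2 → Submodule F W)
    (f : V →ₗ[F] V →ₗ[F] W) (hf : IsSSKE gV gW f)
    (V1 V2 : Submodule F V) (hV1ne : V1 ≠ ⊥) (hV2ne : V2 ≠ ⊥)
    (hV1g : IsGradedSub gV V1) (hV2g : IsGradedSub gV V2)
    (hcompl : IsCompl V1 V2)
    (hzero : ∀ u ∈ V1, ∀ v ∈ V2, f u v = 0)
    (hnd : ∀ u : V, (∀ v : V, f v u = 0) → u = 0) :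
    ∀ W1 W2 : Submodule F W,
      W1 = Submodule.span F {w : W | ∃ u ∈ V1, ∃ v ∈ V1, w = f u v} →
      W2 = Submodule.span F {w : W | ∃ u ∈ V2, ∃ v ∈ V2, w = f u v} →
      ∀ L1 L2 : Submodule F (V × W),
        L1 = V1.prod W1 → L2 = V2.prod W2 →
        (∀ x ∈ L1, ∀ y ∈ L1, superBracket f x y ∈ L1) ∧
        (∀ x ∈ L2, ∀ y ∈ L2, superBracket f x y ∈ L2) ∧
        L1 ⊔ L2 = ⊤ ∧
        (∀ x ∈ L1, ∀ y ∈ L2, superBracket f x y = 0) ∧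
        L1 ⊓ L2 = derivedOn (superBracket f) L1 ⊓ derivedOn (superBracket f) L2 ∧
        L1 ⊓ L2 = (⊥ : Submodule F V).prod (W1 ⊓ W2) ∧
        (∀ z ∈ L1 ⊓ L2, ∀ x : V × W, superBracket f z x = 0) :=
  stmt11_general hf.map₂_top_top hcompl hzero (hf.apply_eq_zero_symm hV1g hV2g hzero)
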